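/- arXiv:2512.03378 — 2 statements merged into one kernel-verified Lean document; each statement's English description precedes it below -/
import Mathlib

section
/- Let β > 0, μ ≥ 1 be real numbers, let s ∈ (0,1), and let ℓ ≥ 1, j, k be natural numbers with 2ℓ ≤ j ≤ k. For 0 ≤ m ≤ k define M_{m,k} := s^{−((μ−1)/(2β))(1/(m+1) − 1/(k+1))} · (m!)^{1/(m+1)} / (k!)^{1/(k+1)}. Then for every i with ℓ ≤ i ≤ j−ℓ one has the exact identity binom(j,i) · M_{i,k}^{i+1} · M_{j−i,k}^{j−i+1} = j! · (k!)^{−(j+2)/(k+1)} · s^{−((μ−1)/(2β))·(2k−j)/(k+1)}, and consequently ∑_{i=ℓ}^{j−ℓ} binom(j,i) · M_{i,k}^{i+1} · M_{j−i,k}^{j−i+1} ≤ j · j! · (k!)^{−(j+2)/(k+1)} · s^{−((μ−1)/(2β))·(2k−j)/(k+1)}. -/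
/-!
Put `A m = s ^ a * m!`. The bridge coefficient is the quotient of roots
`A m ^ (1 / (m + 1)) / A k ^ (1 / (k + 1))`, so its `(m + 1)`-st power is
`A m / A k ^ ((m + 1) / (k + 1))`. In the product of these powers for `i` and `j - i` the
denominators combine to `A k ^ ((j + 2) / (k + 1))`, and the factor `i! * (j - i)!` of the
numerators cancels against the binomial coefficient, so the product does not depend on `i`.
-/

section BridgeCoeff

open scoped Nat

/-- The bridge coefficient `M_{m,k}` of the ascending-chain theorem, where `s = T* - t`, with an
arbitrary real `a` in place of the exponent `-(μ - 1) / (2β)`. -/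
noncomputable def bridgeCoeff (a s : ℝ) (k m : ℕ) : ℝ :=
  s ^ (a * (1 / ((m : ℝ) + 1) - 1 / ((k : ℝ) + 1))) * (m ! : ℝ) ^ (1 / ((m : ℝ) + 1))
    / (k ! : ℝ) ^ (1 / ((k : ℝ) + 1))

lemma bridgeCoeff_eq_div {s : ℝ} (hs : 0 < s) (a : ℝ) (k m : ℕ) :
    bridgeCoeff a s k m
      = (s ^ a * m !) ^ (1 / ((m : ℝ) + 1)) / (s ^ a * k !) ^ (1 / ((k : ℝ) + 1)) := by
  rw [bridgeCoeff, mul_sub, Real.rpow_sub hs, Real.rpow_mul hs.le, Real.rpow_mul hs.le,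
    Real.mul_rpow (by positivity) (by positivity), Real.mul_rpow (by positivity) (by positivity)]
  ring

lemma bridgeCoeff_rpow_add_one {s : ℝ} (hs : 0 < s) (a : ℝ) (k m : ℕ) :
    bridgeCoeff a s k m ^ ((m : ℝ) + 1)
      = s ^ a * m ! / (s ^ a * k !) ^ (((m : ℝ) + 1) / ((k : ℝ) + 1)) := by
  have hm : (m : ℝ) + 1 ≠ 0 := by positivity
  rw [bridgeCoeff_eq_div hs, Real.div_rpow (by positivity) (by positivity),
    ← Real.rpow_mul (by positivity), ← Real.rpow_mul (by positivity), one_div_mul_cancel hm,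
    Real.rpow_one, one_div_mul_eq_div]

lemma choose_mul_bridgeCoeff_rpow_mul_bridgeCoeff_rpow {s : ℝ} (hs : 0 < s) (a : ℝ) (k : ℕ)
    {i j : ℕ} (hij : i ≤ j) :
    (j.choose i : ℝ) * bridgeCoeff a s k i ^ ((i : ℝ) + 1)
        * bridgeCoeff a s k (j - i) ^ (((j - i : ℕ) : ℝ) + 1)
      = (s ^ a) ^ 2 * j ! / (s ^ a * k !) ^ (((j : ℝ) + 2) / ((k : ℝ) + 1)) := by
  have factorial_eq : (j ! : ℝ) = j.choose i * i ! * (j - i)! := by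
    exact_mod_cast (Nat.choose_mul_factorial_mul_factorial hij).symm
  have exponent_eq : ((j : ℝ) + 2) / ((k : ℝ) + 1)
      = ((i : ℝ) + 1) / ((k : ℝ) + 1) + (((j - i : ℕ) : ℝ) + 1) / ((k : ℝ) + 1) := by
    rw [Nat.cast_sub hij]
    ring
  rw [bridgeCoeff_rpow_add_one hs, bridgeCoeff_rpow_add_one hs, factorial_eq, exponent_eq,
    Real.rpow_add (by positivity)]
  ring

lemma sq_rpow_mul_factorial_div_rpow {s : ℝ} (hs : 0 < s) (a : ℝ) (j k : ℕ) :
    (s ^ a) ^ 2 * j ! / (s ^ a * k !) ^ (((j : ℝ) + 2) / ((k : ℝ) + 1))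
      = j ! * (k ! : ℝ) ^ (-(((j : ℝ) + 2) / ((k : ℝ) + 1)))
          * s ^ (a * ((2 * (k : ℝ) - j) / ((k : ℝ) + 1))) := by
  have exponent_eq : a * ((2 * (k : ℝ) - j) / ((k : ℝ) + 1))
      = a * (2 : ℕ) - a * (((j : ℝ) + 2) / ((k : ℝ) + 1)) := by
    push_cast
    field_simp
    ring
  rw [exponent_eq, Real.rpow_sub hs, Real.rpow_mul_natCast hs.le, Real.rpow_mul hs.le,
    Real.mul_rpow (by positivity) (by positivity), Real.rpow_neg (by positivity)]
  ring

lemma sum_Icc_sub_le_mul {ℓ j : ℕ} (hℓ : 1 ≤ ℓ) {f : ℕ → ℝ} {c : ℝ} (hc : 0 ≤ c)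
    (hf : ∀ i ∈ Finset.Icc ℓ (j - ℓ), f i ≤ c) :
    ∑ i ∈ Finset.Icc ℓ (j - ℓ), f i ≤ j * c := by
  have card_le : (Finset.Icc ℓ (j - ℓ)).card ≤ j := by
    rw [Nat.card_Icc]
    omega
  calc ∑ i ∈ Finset.Icc ℓ (j - ℓ), f i
      ≤ (Finset.Icc ℓ (j - ℓ)).card • c := Finset.sum_le_card_nsmul _ _ _ hf
    _ = (Finset.Icc ℓ (j - ℓ)).card * c := nsmul_eq_mul _ _
    _ ≤ j * c := by gcongr

theorem stmt_1_general {s : ℝ} (hs : 0 < s) (a : ℝ) {ℓ j : ℕ} (k : ℕ) (hℓ : 1 ≤ ℓ)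
    (M : ℕ → ℝ) (hM : ∀ m ≤ j, M m = bridgeCoeff a s k m) :
    (∀ i ≤ j,
      (j.choose i : ℝ) * M i ^ ((i : ℝ) + 1) * M (j - i) ^ (((j - i : ℕ) : ℝ) + 1)
        = j ! * (k ! : ℝ) ^ (-(((j : ℝ) + 2) / ((k : ℝ) + 1)))
            * s ^ (a * ((2 * (k : ℝ) - j) / ((k : ℝ) + 1)))) ∧
    ∑ i ∈ Finset.Icc ℓ (j - ℓ),
        (j.choose i : ℝ) * M i ^ ((i : ℝ) + 1) * M (j - i) ^ (((j - i : ℕ) : ℝ) + 1)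
      ≤ j * j ! * (k ! : ℝ) ^ (-(((j : ℝ) + 2) / ((k : ℝ) + 1)))
          * s ^ (a * ((2 * (k : ℝ) - j) / ((k : ℝ) + 1))) := by
  refine (and_iff_left_of_imp fun term_eq => ?_).mpr fun i hij => ?_
  · rw [mul_assoc (j : ℝ), mul_assoc (j : ℝ)]
    exact sum_Icc_sub_le_mul hℓ (by positivity) fun i hi =>
      (term_eq i ((Finset.mem_Icc.mp hi).2.trans (Nat.sub_le j ℓ))).le
  · rw [hM i hij, hM (j - i) (Nat.sub_le j i),
      choose_mul_bridgeCoeff_rpow_mul_bridgeCoeff_rpow hs a k hij,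
      sq_rpow_mul_factorial_div_rpow hs]

end BridgeCoeff

/-- Verification of the first compatibility condition of the ascending-chain
theorem: for the time-weighted bridge coefficients
`M m = s^{−((μ−1)/(2β))(1/(m+1) − 1/(k+1))} · (m!)^{1/(m+1)} / (k!)^{1/(k+1)}`,
each term of the sum equals
`j! · (k!)^{−(j+2)/(k+1)} · s^{−((μ−1)/(2β))·(2k−j)/(k+1)}`, so the sum is at
most `j` times this quantity. -/
theorem stmt_1 (β μ s : ℝ) (hβ : 0 < β) (hμ : 1 ≤ μ) (hs : s ∈ Set.Ioo (0 : ℝ) 1)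
    (ℓ j k : ℕ) (hℓ : 1 ≤ ℓ) (hj : 2 * ℓ ≤ j) (hjk : j ≤ k)
    (M : ℕ → ℝ)
    (hM : ∀ m : ℕ, m ≤ k → M m
      = s ^ (-((μ - 1) / (2 * β)) * (1 / ((m : ℝ) + 1) - 1 / ((k : ℝ) + 1)))
          * (Nat.factorial m : ℝ) ^ ((1 : ℝ) / ((m : ℝ) + 1))
          / (Nat.factorial k : ℝ) ^ ((1 : ℝ) / ((k : ℝ) + 1))) :
    (∀ i : ℕ, ℓ ≤ i → i ≤ j - ℓ →
      (j.choose i : ℝ) * (M i) ^ ((i : ℝ) + 1) * (M (j - i)) ^ (((j - i : ℕ) : ℝ) + 1)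
        = (Nat.factorial j : ℝ)
            * (Nat.factorial k : ℝ) ^ (-(((j : ℝ) + 2) / ((k : ℝ) + 1)))
            * s ^ (-((μ - 1) / (2 * β)) * ((2 * (k : ℝ) - j) / ((k : ℝ) + 1)))) ∧
    ∑ i ∈ Finset.Icc ℓ (j - ℓ),
        (j.choose i : ℝ) * (M i) ^ ((i : ℝ) + 1) * (M (j - i)) ^ (((j - i : ℕ) : ℝ) + 1)
      ≤ (j : ℝ) * (Nat.factorial j : ℝ)
          * (Nat.factorial k : ℝ) ^ (-(((j : ℝ) + 2) / ((k : ℝ) + 1)))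
          * s ^ (-((μ - 1) / (2 * β)) * ((2 * (k : ℝ) - j) / ((k : ℝ) + 1))) := by
  have general := stmt_1_general hs.1 _ k hℓ M fun m hm => hM m (hm.trans hjk)
  exact ⟨fun i _ hi => general.1 i (hi.trans (Nat.sub_le j ℓ)), general.2⟩
end

section
/- For all natural numbers j, k with 1 ≤ j ≤ k, one has j · j! · (k!)^{−(j+2)/(k+1)} ≤ e² · (j!)^{1/(j+1)} · (j!)^{(k−j)/(k+1)} · (k!)^{−1/(k+1)}. -/
/-!
The inequality is a product of two independent ones. Raising to the power `j + 1`, the bound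
`j ≤ e² (j!)^{1/(j+1)}` becomes `j ^ (j + 1) ≤ e ^ (2 (j + 1)) j!`, which follows from two single
terms of the exponential series. The remaining powers of `j!` and `k!` compare by monotonicity of
`x ↦ x ^ t` with `t = (j + 1) / (k + 1)`, since `j! ≤ k!` and `1 - t = (k - j) / (k + 1)`.
-/

open scoped Nat

theorem pow_succ_le_exp_two_mul_mul_factorial {x : ℝ} (hx : 0 ≤ x) (n : ℕ) :
    x ^ (n + 1) ≤ Real.exp (2 * x) * n ! := by
  have hpow : x ^ n ≤ Real.exp x * n ! :=
    (div_le_iff₀ (by positivity)).1 (Real.pow_div_factorial_le_exp x hx n)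
  have hself : x ≤ Real.exp x := by linarith [Real.add_one_le_exp x]
  calc x ^ (n + 1) = x ^ n * x := pow_succ x n
    _ ≤ Real.exp x * n ! * Real.exp x := by gcongr
    _ = Real.exp (2 * x) * n ! := by rw [two_mul, Real.exp_add]; ring

theorem natCast_le_exp_two_mul_factorial_rpow (n : ℕ) :
    (n : ℝ) ≤ Real.exp 2 * (n ! : ℝ) ^ ((1 : ℝ) / ((n : ℝ) + 1)) := by
  have hroot : ((n ! : ℝ) ^ ((1 : ℝ) / ((n : ℝ) + 1))) ^ (n + 1) = n ! := by
    rw [one_div]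
    exact_mod_cast Real.rpow_inv_natCast_pow (Nat.cast_nonneg n !) n.succ_ne_zero
  refine le_of_pow_le_pow_left₀ n.succ_ne_zero (by positivity) ?_
  calc (n : ℝ) ^ (n + 1) ≤ Real.exp (2 * n) * n ! :=
        pow_succ_le_exp_two_mul_mul_factorial n.cast_nonneg n
    _ ≤ Real.exp (2 * (n + 1)) * n ! := by gcongr; linarith
    _ = (Real.exp 2 * (n ! : ℝ) ^ ((1 : ℝ) / ((n : ℝ) + 1))) ^ (n + 1) := by
        rw [mul_pow, hroot, ← Real.exp_nat_mul]
        push_cast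
        ring_nf

theorem mul_rpow_neg_add_le_rpow_one_sub_mul_rpow_neg {a b t : ℝ} (ha : 0 < a) (hab : a ≤ b)
    (ht : 0 ≤ t) (s : ℝ) :
    a * b ^ (-(s + t)) ≤ a ^ (1 - t) * b ^ (-s) := by
  have hb : 0 < b := ha.trans_le hab
  calc a * b ^ (-(s + t)) = a ^ (1 - t) * a ^ t * b ^ (-(s + t)) := by
        rw [← Real.rpow_add ha, sub_add_cancel, Real.rpow_one]
    _ ≤ a ^ (1 - t) * b ^ t * b ^ (-(s + t)) := by gcongr
    _ = a ^ (1 - t) * b ^ (-s) := by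
        rw [mul_assoc, ← Real.rpow_add hb, neg_add_rev, add_neg_cancel_left]

/-- Factorial bookkeeping inequality: for `1 ≤ j ≤ k`,
`j · j! · (k!)^{−(j+2)/(k+1)} ≤ e² · (j!)^{1/(j+1)} · (j!)^{(k−j)/(k+1)} · (k!)^{−1/(k+1)}`. -/
theorem stmt_3 (j k : ℕ) (hj : 1 ≤ j) (hjk : j ≤ k) :
    (j : ℝ) * (Nat.factorial j : ℝ)
        * (Nat.factorial k : ℝ) ^ (-(((j : ℝ) + 2) / ((k : ℝ) + 1)))
      ≤ Real.exp 2 * (Nat.factorial j : ℝ) ^ ((1 : ℝ) / ((j : ℝ) + 1))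
          * (Nat.factorial j : ℝ) ^ (((k : ℝ) - j) / ((k : ℝ) + 1))
          * (Nat.factorial k : ℝ) ^ (-((1 : ℝ) / ((k : ℝ) + 1))) := by
  have hfactorial : (j ! : ℝ) ≤ k ! := by exact_mod_cast Nat.factorial_le hjk
  have hpowers := mul_rpow_neg_add_le_rpow_one_sub_mul_rpow_neg
    (t := ((j : ℝ) + 1) / ((k : ℝ) + 1)) (by positivity) hfactorial (by positivity)
    (1 / ((k : ℝ) + 1))
  have hsum : 1 / ((k : ℝ) + 1) + ((j : ℝ) + 1) / ((k : ℝ) + 1)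
      = ((j : ℝ) + 2) / ((k : ℝ) + 1) := by ring
  have hsub : 1 - ((j : ℝ) + 1) / ((k : ℝ) + 1) = ((k : ℝ) - j) / ((k : ℝ) + 1) := by
    field_simp
    ring
  rw [hsum, hsub] at hpowers
  rw [mul_assoc, mul_assoc (Real.exp 2 * _)]
  exact mul_le_mul (natCast_le_exp_two_mul_factorial_rpow j) hpowers
    (by positivity) (by positivity)
end
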